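/- Linear symplectic capacity of an ellipsoid: Let M be a real symmetric positive-definite 2n×2n matrix with largest symplectic eigenvalue λ₁, and let R > 0. Then there exists S ∈ Sp(2n,ℝ) such that S maps the closed Euclidean ball B(R) = {z ∈ ℝ²ⁿ : |z| ≤ R} into the ellipsoid {z ∈ ℝ²ⁿ : Mz·z ≤ 1} if and only if R² λ₁ ≤ 1. Consequently sup{πR² : ∃ S ∈ Sp(2n,ℝ), S(B(R)) ⊆ {Mz·z ≤ 1}} = π/λ₁. -/

import Mathlib

open Matrix Polynomial

/-- The standard symplectic matrix `J = [[0, Iₙ], [-Iₙ, 0]]`, with rows/columns indexed by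
`Fin n ⊕ Fin n` (positions first, momenta second). -/
def Jmat (n : ℕ) : Matrix (Fin n ⊕ Fin n) (Fin n ⊕ Fin n) ℝ :=
  Matrix.fromBlocks 0 1 (-1) 0

/-- `S` is symplectic: `Sᵀ J S = J`. -/
def IsSymplectic {n : ℕ} (S : Matrix (Fin n ⊕ Fin n) (Fin n ⊕ Fin n) ℝ) : Prop :=
  Sᵀ * Jmat n * S = Jmat n

open scoped MatrixOrder in
/-- A positive definite matrix has a positive definite square root which commutes with everything
that commutes with the matrix. -/
theorem Matrix.PosDef.exists_sqrt {ι : Type*} [Fintype ι] [DecidableEq ι] {A : Matrix ι ι ℝ}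
    (hA : A.PosDef) : ∃ B : Matrix ι ι ℝ, B.PosDef ∧ B * B = A ∧
      ∀ K : Matrix ι ι ℝ, Commute A K → Commute B K := by
  have hA0 : (0 : Matrix ι ι ℝ) ≤ A := hA.posSemidef.nonneg
  have hBB : CFC.sqrt A * CFC.sqrt A = A := CFC.sqrt_mul_sqrt_self A hA0
  have hB : (CFC.sqrt A).PosSemidef := Matrix.nonneg_iff_posSemidef.1 (CFC.sqrt_nonneg A)
  refine ⟨CFC.sqrt A, hB.posDef_iff_isUnit.2 ?_, hBB, fun K hK => ?_⟩
  · exact isUnit_of_mul_isUnit_left (hBB.symm ▸ hA.isUnit)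
  · rw [CFC.sqrt_eq_cfc]
    exact hK.cfc_nnreal _

open scoped MatrixOrder in
theorem Matrix.PosSemidef.eq_of_mul_self_eq {ι : Type*} [Fintype ι] [DecidableEq ι]
    {A B : Matrix ι ι ℝ} (hA : A.PosSemidef) (hB : B.PosSemidef) (h : A * A = B * B) : A = B :=
  (CFC.sqrt_unique h hA.nonneg).symm.trans (CFC.sqrt_unique rfl hB.nonneg)

/-- The operator norms of a matrix and of its transpose agree, as a bound on quadratic forms. -/
theorem Matrix.dotProduct_mulVec_self_le_of_transpose {ι : Type*} [Fintype ι]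
    {T : Matrix ι ι ℝ} {c : ℝ} (hc : 0 ≤ c)
    (h : ∀ x, (Tᵀ *ᵥ x) ⬝ᵥ (Tᵀ *ᵥ x) ≤ c * (x ⬝ᵥ x)) (z : ι → ℝ) :
    (T *ᵥ z) ⬝ᵥ (T *ᵥ z) ≤ c * (z ⬝ᵥ z) := by
  have hz : 0 ≤ z ⬝ᵥ z := Finset.sum_nonneg fun i _ => mul_self_nonneg _
  have ha : 0 ≤ (T *ᵥ z) ⬝ᵥ (T *ᵥ z) := Finset.sum_nonneg fun i _ => mul_self_nonneg _
  have h1 : (T *ᵥ z) ⬝ᵥ (T *ᵥ z) = z ⬝ᵥ (Tᵀ *ᵥ (T *ᵥ z)) := by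
    rw [dotProduct_mulVec z, vecMul_transpose]
  have hcs : (z ⬝ᵥ (Tᵀ *ᵥ (T *ᵥ z))) ^ 2
      ≤ (z ⬝ᵥ z) * ((Tᵀ *ᵥ (T *ᵥ z)) ⬝ᵥ (Tᵀ *ᵥ (T *ᵥ z))) := by
    simpa [dotProduct, sq] using
      Finset.sum_mul_sq_le_sq_mul_sq Finset.univ z (Tᵀ *ᵥ (T *ᵥ z))
  rw [← h1] at hcs
  have h2 := mul_le_mul_of_nonneg_left (h (T *ᵥ z)) hz
  rcases ha.eq_or_lt with h0 | h0
  · rw [← h0]; positivity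
  · refine le_of_mul_le_mul_right ?_ h0
    linarith [sq ((T *ᵥ z) ⬝ᵥ (T *ᵥ z))]

theorem Matrix.det_mul_self_add_smul_one {ι κ : Type*} [Fintype ι] [DecidableEq ι] [Fintype κ]
    {A : Matrix ι ι ℝ} {lam : κ → ℝ} (h : A.charpoly = ∏ j, (X ^ 2 + C (lam j ^ 2))) (t : ℝ) :
    (A * A + t ^ 2 • (1 : Matrix ι ι ℝ)).det = (∏ j, (lam j ^ 2 - t ^ 2)) ^ 2 := by
  let f : ℝ →+* ℂ := algebraMap ℝ ℂ
  have hf : ∀ s : ℂ, s ^ 2 = -(t : ℂ) ^ 2 →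
      (scalar ι s - A.map f).det = ∏ j, ((lam j : ℂ) ^ 2 - (t : ℂ) ^ 2) := by
    intro s hs
    rw [← eval_charpoly]
    change eval s (f.mapMatrix A).charpoly = _
    rw [RingHom.mapMatrix_apply, charpoly_map, h, Polynomial.map_prod, eval_prod]
    refine Finset.prod_congr rfl fun j _ => ?_
    simp [hs, f]
    ring
  have hI : (Complex.I * t) ^ 2 = -(t : ℂ) ^ 2 := by rw [mul_pow, Complex.I_sq]; ring
  have key : (A * A + t ^ 2 • (1 : Matrix ι ι ℝ)).map f
      = (scalar ι (Complex.I * t) - A.map f) * (scalar ι (-(Complex.I * t)) - A.map f) := by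
    have e : (A * A + t ^ 2 • (1 : Matrix ι ι ℝ)).map f
        = A.map f * A.map f + scalar ι ((t : ℂ) ^ 2) := by
      rw [← RingHom.mapMatrix_apply, map_add, map_mul]
      congr 1
      ext i j
      by_cases hij : i = j <;> simp [hij, f]
    have hc : Commute (scalar ι (Complex.I * t)) (A.map f) :=
      scalar_commute _ (fun _ => Commute.all _ _) _
    rw [e, map_neg, sub_mul, mul_sub, mul_sub, mul_neg, mul_neg, ← hc.eq, ← map_mul,
      ← sq (Complex.I * (t : ℂ)), hI, map_neg]
    abel
  have hd : f ((A * A + t ^ 2 • (1 : Matrix ι ι ℝ)).det)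
      = f ((∏ j, (lam j ^ 2 - t ^ 2)) ^ 2) := by
    rw [RingHom.map_det, RingHom.mapMatrix_apply, key, det_mul, hf _ hI,
      hf _ (by rw [neg_sq, hI]), ← sq]
    simp [f]
  exact f.injective hd

theorem Jmat_mul_Jmat (n : ℕ) : Jmat n * Jmat n = -1 := by
  simp [Jmat, fromBlocks_multiply, ← fromBlocks_one, fromBlocks_neg]

theorem Jmat_transpose (n : ℕ) : (Jmat n)ᵀ = -Jmat n := by
  simp [Jmat, fromBlocks_transpose, fromBlocks_neg]

theorem Jmat_mulVec_dotProduct_self {n : ℕ} (x : Fin n ⊕ Fin n → ℝ) :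
    (Jmat n *ᵥ x) ⬝ᵥ (Jmat n *ᵥ x) = x ⬝ᵥ x := by
  rw [dotProduct_mulVec, ← mulVec_transpose, mulVec_mulVec, Jmat_transpose, neg_mul,
    Jmat_mul_Jmat, neg_neg, one_mulVec]

theorem IsSymplectic.mul_Jmat_mul_transpose {n : ℕ} {S : Matrix (Fin n ⊕ Fin n) (Fin n ⊕ Fin n) ℝ}
    (hS : IsSymplectic S) : S * Jmat n * Sᵀ = Jmat n := by
  have h1 : (-(Jmat n * Sᵀ * Jmat n)) * S = 1 := by
    rw [neg_mul, mul_assoc, mul_assoc, ← mul_assoc Sᵀ, hS, Jmat_mul_Jmat, neg_neg]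
  have h2 : S * Jmat n * Sᵀ * Jmat n = -1 := by
    rw [← mul_eq_one_comm.1 h1]; simp [mul_assoc]
  have h3 := congrArg (· * Jmat n) h2
  simpa [mul_assoc, Jmat_mul_Jmat] using h3

/-- The square root of a positive definite symplectic matrix is symplectic. -/
theorem IsSymplectic.of_mul_self {n : ℕ} {S : Matrix (Fin n ⊕ Fin n) (Fin n ⊕ Fin n) ℝ}
    (hS : S.PosDef) (h : IsSymplectic (S * S)) : IsSymplectic S := by
  have hSt : Sᵀ = S := hS.isHermitian
  have hu : IsUnit S.det := (isUnit_iff_isUnit_det S).1 hS.isUnit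
  have hPJP : S * S * Jmat n * (S * S) = Jmat n := by
    simpa [IsSymplectic, hSt] using h
  have hpsd : (-(Jmat n * S⁻¹ * Jmat n)).PosSemidef := by
    have := hS.inv.posSemidef.conjTranspose_mul_mul_same (Jmat n)
    rwa [conjTranspose_eq_transpose_of_trivial, Jmat_transpose, neg_mul, neg_mul] at this
  have hsq : -(Jmat n * S⁻¹ * Jmat n) * -(Jmat n * S⁻¹ * Jmat n) = S * S := by
    have e : -(Jmat n * S⁻¹ * Jmat n) * -(Jmat n * S⁻¹ * Jmat n)
        = -(Jmat n * (S⁻¹ * S⁻¹) * Jmat n) := by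
      calc _ = Jmat n * S⁻¹ * (Jmat n * Jmat n) * S⁻¹ * Jmat n := by
            simp only [neg_mul_neg, mul_assoc]
        _ = _ := by rw [Jmat_mul_Jmat]; simp [mul_assoc]
    have e2 : S⁻¹ * S⁻¹ * Jmat n = Jmat n * (S * S) := by
      calc _ = S⁻¹ * S⁻¹ * (S * S * Jmat n * (S * S)) := by rw [hPJP]
        _ = S⁻¹ * (S⁻¹ * S) * S * (Jmat n * (S * S)) := by simp only [mul_assoc]
        _ = _ := by rw [nonsing_inv_mul S hu, mul_one, nonsing_inv_mul S hu, one_mul]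
    rw [e, mul_assoc, e2, ← mul_assoc, Jmat_mul_Jmat]
    simp
  have hfix := hpsd.eq_of_mul_self_eq hS.posSemidef hsq
  calc Sᵀ * Jmat n * S = S * Jmat n * -(Jmat n * S⁻¹ * Jmat n) := by rw [hSt, hfix]
    _ = -(S * (Jmat n * Jmat n) * S⁻¹ * Jmat n) := by simp only [mul_neg, mul_assoc]
    _ = S * S⁻¹ * Jmat n := by rw [Jmat_mul_Jmat]; simp
    _ = Jmat n := by rw [mul_nonsing_inv S hu, one_mul]

/-- If the symplectic eigenvalues of `M` are bounded by `μ`, some linear symplectic change of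
coordinates bounds the quadratic form of `M` by `μ` times the Euclidean one. -/
theorem Matrix.PosDef.exists_isSymplectic_le {n : ℕ}
    {M : Matrix (Fin n ⊕ Fin n) (Fin n ⊕ Fin n) ℝ} (hM : M.PosDef) {lam : Fin n → ℝ}
    (hspec : (Jmat n * M).charpoly = ∏ j : Fin n, (X ^ 2 + C (lam j ^ 2)))
    {μ : ℝ} (hμ : 0 ≤ μ) (hle : ∀ j, lam j ≤ μ) (hlam : ∀ j, 0 < lam j) :
    ∃ S : Matrix (Fin n ⊕ Fin n) (Fin n ⊕ Fin n) ℝ, IsSymplectic S ∧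
      ∀ z, (M *ᵥ (S *ᵥ z)) ⬝ᵥ (S *ᵥ z) ≤ μ * (z ⬝ᵥ z) := by
  obtain ⟨B, hB, hBB, -⟩ := hM.exists_sqrt
  have hBt : Bᵀ = B := hB.isHermitian
  have hBu : IsUnit B.det := (isUnit_iff_isUnit_det B).1 hB.isUnit
  have hB1 : B * B⁻¹ = 1 := mul_nonsing_inv B hBu
  have hB2 : B⁻¹ * B = 1 := nonsing_inv_mul B hBu
  set K := B * Jmat n * B with hK
  have hKt : Kᵀ = -K := by
    simp [hK, hBt, Jmat_transpose, mul_assoc]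
  have hKspec : K.charpoly = ∏ j : Fin n, (X ^ 2 + C (lam j ^ 2)) := by
    rw [hK, mul_assoc, charpoly_mul_comm, mul_assoc, hBB, hspec]
  have hJu : IsUnit (Jmat n) :=
    IsUnit.of_mul_eq_one (-Jmat n) (by rw [mul_neg, Jmat_mul_Jmat, neg_neg])
  have hKu : IsUnit K := (hB.isUnit.mul hJu).mul hB.isUnit
  have hKdet : IsUnit K.det := (isUnit_iff_isUnit_det K).1 hKu
  have hKK : (-(K * K)).PosDef := by
    have := PosDef.conjTranspose_mul_self K (mulVec_injective_of_isUnit hKu)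
    rwa [conjTranspose_eq_transpose_of_trivial, hKt, neg_mul] at this
  obtain ⟨D, hD, hDD, hcomm⟩ := hKK.exists_sqrt
  have hDK : D * K = K * D := hcomm K ((Commute.refl K).mul_left (Commute.refl K)).neg_left
  have hDle : (μ • (1 : Matrix (Fin n ⊕ Fin n) (Fin n ⊕ Fin n) ℝ) - D).PosSemidef := by
    have hH : (μ • (1 : Matrix (Fin n ⊕ Fin n) (Fin n ⊕ Fin n) ℝ) - D).IsHermitian :=
      (IsHermitian.ext fun i j => by by_cases h : i = j <;> simp [h, eq_comm]).sub
        hD.isHermitian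
    rw [hH.posSemidef_iff_eigenvalues_nonneg]
    intro i
    set a := hH.eigenvalues i
    set v : Fin n ⊕ Fin n → ℝ := (hH.eigenvectorBasis i).ofLp with hv
    have hv0 : v ≠ 0 := by
      intro h
      apply hH.eigenvectorBasis.orthonormal.ne_zero i
      ext k
      exact congrFun h k
    have he : (μ • (1 : Matrix (Fin n ⊕ Fin n) (Fin n ⊕ Fin n) ℝ) - D) *ᵥ v = a • v :=
      hH.mulVec_eigenvectorBasis i
    have hDv : D *ᵥ v = (μ - a) • v := by
      rw [sub_mulVec, smul_mulVec, one_mulVec] at he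
      rw [sub_smul, ← he]; abel
    have hdet : (K * K + (μ - a) ^ 2 • (1 : Matrix (Fin n ⊕ Fin n) (Fin n ⊕ Fin n) ℝ)).det = 0 := by
      refine exists_mulVec_eq_zero_iff.1 ⟨v, hv0, ?_⟩
      have : K * K = -(D * D) := by rw [hDD, neg_neg]
      rw [this, add_mulVec, neg_mulVec, ← mulVec_mulVec, hDv, mulVec_smul, hDv, smul_mulVec,
        one_mulVec, smul_smul, sq, neg_add_cancel]
    rw [det_mul_self_add_smul_one hKspec] at hdet
    obtain ⟨j, -, hj⟩ := Finset.prod_eq_zero_iff.1 (pow_eq_zero_iff two_ne_zero |>.1 hdet)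
    have := hle j
    have := hlam j
    show 0 ≤ a
    nlinarith
  set P := B⁻¹ * D * B⁻¹ with hP
  have hBit : (B⁻¹)ᴴ = B⁻¹ := hB.inv.isHermitian
  have hPpos : P.PosDef := by
    have := hD.conjTranspose_mul_mul_same (B := B⁻¹)
      (mulVec_injective_of_isUnit hB.inv.isUnit)
    rwa [hBit] at this
  obtain ⟨S, hS, hSS, -⟩ := hPpos.exists_sqrt
  have hSt : Sᵀ = S := hS.isHermitian
  have hPt : Pᵀ = P := hPpos.isHermitian
  have hKP : P * Jmat n * P = Jmat n := by
    have e1 : B⁻¹ * Jmat n * B⁻¹ = -K⁻¹ := by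
      have : K * -(B⁻¹ * Jmat n * B⁻¹) = 1 := by
        calc _ = -(B * Jmat n * (B * B⁻¹) * Jmat n * B⁻¹) := by
              simp only [hK, mul_neg, mul_assoc]
          _ = -(B * (Jmat n * Jmat n) * B⁻¹) := by rw [hB1]; simp only [mul_one, mul_assoc]
          _ = 1 := by rw [Jmat_mul_Jmat]; simp [hB1]
      rw [inv_eq_right_inv this, neg_neg]
    have e2 : D * K⁻¹ * D = -K := by
      calc D * K⁻¹ * D = K⁻¹ * (K * D) * K⁻¹ * D := by
            rw [← mul_assoc K⁻¹, nonsing_inv_mul K hKdet, one_mul]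
        _ = K⁻¹ * D * (K * K⁻¹) * D := by rw [← hDK]; simp only [mul_assoc]
        _ = K⁻¹ * (D * D) := by rw [mul_nonsing_inv K hKdet, mul_one, mul_assoc]
        _ = -K := by rw [hDD, mul_neg, ← mul_assoc, nonsing_inv_mul K hKdet, one_mul]
    calc P * Jmat n * P = B⁻¹ * (D * (B⁻¹ * Jmat n * B⁻¹) * D) * B⁻¹ := by
          simp only [hP, mul_assoc]
      _ = B⁻¹ * K * B⁻¹ := by rw [e1, mul_neg, neg_mul, e2, neg_neg]
      _ = (B⁻¹ * B) * Jmat n * (B * B⁻¹) := by simp only [hK, mul_assoc]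
      _ = Jmat n := by rw [hB1, hB2, one_mul, mul_one]
  refine ⟨S, IsSymplectic.of_mul_self hS (by rw [hSS, IsSymplectic, hPt, hKP]), fun z => ?_⟩
  have hTT : (B * S) * (B * S)ᵀ = D := by
    calc _ = B * (S * S) * B := by rw [transpose_mul, hSt, hBt]; simp only [mul_assoc]
      _ = (B * B⁻¹) * D * (B⁻¹ * B) := by rw [hSS]; simp only [hP, mul_assoc]
      _ = D := by rw [hB1, hB2, one_mul, mul_one]
  have hq : (M *ᵥ (S *ᵥ z)) ⬝ᵥ (S *ᵥ z) = ((B * S) *ᵥ z) ⬝ᵥ ((B * S) *ᵥ z) := by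
    rw [← hBB, ← mulVec_mulVec, ← mulVec_mulVec, dotProduct_mulVec _ B, ← mulVec_transpose, hBt]
  rw [hq]
  refine dotProduct_mulVec_self_le_of_transpose hμ (fun x => ?_) z
  have h0 := hDle.dotProduct_mulVec_nonneg x
  rw [dotProduct_mulVec _ (B * S)ᵀ, ← mulVec_transpose, transpose_transpose, mulVec_mulVec, hTT]
  rw [sub_mulVec, smul_mulVec, one_mulVec, dotProduct_sub, dotProduct_smul, star_trivial,
    smul_eq_mul, dotProduct_comm x (D *ᵥ x)] at h0
  linarith

/-- If a linear symplectic image of the quadratic form of `M` is bounded by `c` times the Euclidean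
one, then every symplectic eigenvalue of `M` is at most `c`. -/
theorem IsSymplectic.le_of_forall_le {n : ℕ}
    {M S : Matrix (Fin n ⊕ Fin n) (Fin n ⊕ Fin n) ℝ} (hS : IsSymplectic S) (hM : M.PosDef)
    {lam : Fin n → ℝ} (hspec : (Jmat n * M).charpoly = ∏ j : Fin n, (X ^ 2 + C (lam j ^ 2)))
    {c : ℝ} (hc : 0 ≤ c) (h : ∀ z, (M *ᵥ (S *ᵥ z)) ⬝ᵥ (S *ᵥ z) ≤ c * (z ⬝ᵥ z)) (j : Fin n) :
    lam j ≤ c := by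
  obtain ⟨B, hB, hBB, -⟩ := hM.exists_sqrt
  have hBt : Bᵀ = B := hB.isHermitian
  set T := B * S with hT
  have hTle : ∀ z, (T *ᵥ z) ⬝ᵥ (T *ᵥ z) ≤ c * (z ⬝ᵥ z) := fun z => by
    refine le_of_eq_of_le ?_ (h z)
    rw [← hBB, hT, ← mulVec_mulVec, ← mulVec_mulVec, dotProduct_mulVec _ B, ← mulVec_transpose,
      hBt]
  have hTtle := dotProduct_mulVec_self_le_of_transpose (T := Tᵀ) hc
    (by simpa only [transpose_transpose] using hTle)
  set N := Jmat n * (Tᵀ * T) with hN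
  have hNle : ∀ z, (N *ᵥ z) ⬝ᵥ (N *ᵥ z) ≤ c ^ 2 * (z ⬝ᵥ z) := fun z => by
    rw [hN, ← mulVec_mulVec, Jmat_mulVec_dotProduct_self, ← mulVec_mulVec]
    calc _ ≤ c * ((T *ᵥ z) ⬝ᵥ (T *ᵥ z)) := hTtle _
      _ ≤ c * (c * (z ⬝ᵥ z)) := mul_le_mul_of_nonneg_left (hTle z) hc
      _ = _ := by ring
  have hNspec : N.charpoly = ∏ j : Fin n, (X ^ 2 + C (lam j ^ 2)) := by
    have e : N = Jmat n * Sᵀ * M * S := by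
      simp only [hN, hT, transpose_mul, hBt, ← hBB, mul_assoc]
    rw [e, charpoly_mul_comm, ← hspec, ← mul_assoc, ← mul_assoc, hS.mul_Jmat_mul_transpose]
  have hdet : (N * N + lam j ^ 2 • (1 : Matrix (Fin n ⊕ Fin n) (Fin n ⊕ Fin n) ℝ)).det = 0 := by
    rw [det_mul_self_add_smul_one hNspec,
      Finset.prod_eq_zero (Finset.mem_univ j) (sub_self _), zero_pow two_ne_zero]
  obtain ⟨v, hv0, hv⟩ := exists_mulVec_eq_zero_iff.2 hdet
  rw [add_mulVec, ← mulVec_mulVec, smul_mulVec, one_mulVec, add_eq_zero_iff_eq_neg] at hv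
  have hvpos : 0 < v ⬝ᵥ v :=
    lt_of_le_of_ne (Finset.sum_nonneg fun i _ => mul_self_nonneg _)
      (Ne.symm (mt dotProduct_self_eq_zero.1 hv0))
  have h1 := (hNle (N *ᵥ v)).trans (mul_le_mul_of_nonneg_left (hNle v) (sq_nonneg c))
  rw [hv, neg_dotProduct, dotProduct_neg, neg_neg, smul_dotProduct, dotProduct_smul, smul_eq_mul,
    smul_eq_mul, ← mul_assoc, ← mul_assoc] at h1
  have h2 : (lam j) ^ 4 ≤ c ^ 4 := by
    have := le_of_mul_le_mul_right h1 hvpos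
    linarith [this, show (lam j) ^ 2 * (lam j) ^ 2 = (lam j) ^ 4 by ring,
      show c ^ 2 * c ^ 2 = c ^ 4 by ring]
  exact le_of_pow_le_pow_left₀ four_ne_zero hc h2

theorem exists_isSymplectic_ball_subset_iff {n : ℕ}
    {M : Matrix (Fin n ⊕ Fin n) (Fin n ⊕ Fin n) ℝ} (hM : M.PosDef)
    {lam : Fin n → ℝ} (hlam : ∀ j, 0 < lam j)
    (hspec : (Jmat n * M).charpoly = ∏ j : Fin n, (X ^ 2 + C (lam j ^ 2)))
    {lam1 : ℝ} (hlam1 : IsGreatest (Set.range lam) lam1) {R : ℝ} (hR : 0 < R) :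
    (∃ S : Matrix (Fin n ⊕ Fin n) (Fin n ⊕ Fin n) ℝ, IsSymplectic S ∧
        ∀ z : Fin n ⊕ Fin n → ℝ, Real.sqrt (∑ i, z i ^ 2) ≤ R →
          M.mulVec (S.mulVec z) ⬝ᵥ S.mulVec z ≤ 1) ↔ R ^ 2 * lam1 ≤ 1 := by
  obtain ⟨⟨j, rfl⟩, hub⟩ := hlam1
  have hsum : ∀ z : Fin n ⊕ Fin n → ℝ, ∑ i, z i ^ 2 = z ⬝ᵥ z := fun z => by
    simp [dotProduct, sq]
  simp only [hsum]
  constructor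
  · rintro ⟨S, hS, h⟩
    have hle := hS.le_of_forall_le hM hspec (c := (R ^ 2)⁻¹) (by positivity) (fun z => ?_) j
    · calc R ^ 2 * lam j ≤ R ^ 2 * (R ^ 2)⁻¹ := by gcongr
        _ = 1 := mul_inv_cancel₀ (by positivity)
    rcases (show 0 ≤ z ⬝ᵥ z from Finset.sum_nonneg fun i _ => mul_self_nonneg _).eq_or_lt
      with h0 | h0
    · rw [dotProduct_self_eq_zero.1 h0.symm]; simp
    · set r := Real.sqrt (z ⬝ᵥ z)
      have hr : 0 < r := Real.sqrt_pos.2 h0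
      have hrr : r ^ 2 = z ⬝ᵥ z := Real.sq_sqrt h0.le
      have hsc := h ((R / r) • z) (by
        rw [smul_dotProduct, dotProduct_smul, smul_eq_mul, smul_eq_mul, ← hrr,
          show R / r * (R / r * r ^ 2) = R ^ 2 by field_simp, Real.sqrt_sq hR.le])
      rw [mulVec_smul, mulVec_smul, smul_dotProduct, dotProduct_smul, smul_eq_mul,
        smul_eq_mul] at hsc
      rw [← hrr, inv_mul_eq_div, le_div_iff₀ (by positivity)]
      have e : R / r * (R / r * ((M *ᵥ (S *ᵥ z)) ⬝ᵥ (S *ᵥ z)))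
          = ((M *ᵥ (S *ᵥ z)) ⬝ᵥ (S *ᵥ z)) * R ^ 2 / r ^ 2 := by field_simp
      rwa [e, div_le_one (by positivity)] at hsc
  · intro h
    obtain ⟨S, hS, hle⟩ := hM.exists_isSymplectic_le hspec (hlam j).le
      (fun k => hub (Set.mem_range_self k)) hlam
    refine ⟨S, hS, fun z hz => (hle z).trans ?_⟩
    have hz2 : z ⬝ᵥ z ≤ R ^ 2 := (Real.sqrt_le_left hR.le).1 hz
    have := mul_le_mul_of_nonneg_left hz2 (hlam j).le
    linarith

/-- Linear symplectic capacity of an ellipsoid: a symplectic matrix maps the closed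
Euclidean ball of radius `R` into the ellipsoid `{Mz·z ≤ 1}` if and only if `R²λ₁ ≤ 1`,
where `λ₁` is the largest symplectic eigenvalue of `M`; consequently the linear symplectic
capacity `sup {πR² : ∃ S symplectic, S(B(R)) ⊆ {Mz·z ≤ 1}}` equals `π/λ₁`. -/
theorem linear_symplectic_capacity_ellipsoid (n : ℕ) (hn : 0 < n)
    (M : Matrix (Fin n ⊕ Fin n) (Fin n ⊕ Fin n) ℝ) (hM : M.PosDef)
    (lam : Fin n → ℝ) (hlam : ∀ j, 0 < lam j)
    (hspec : (Jmat n * M).charpoly = ∏ j : Fin n, (X ^ 2 + C (lam j ^ 2)))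
    (lam1 : ℝ) (hlam1 : IsGreatest (Set.range lam) lam1)
    (R : ℝ) (hR : 0 < R) :
    ((∃ S : Matrix (Fin n ⊕ Fin n) (Fin n ⊕ Fin n) ℝ, IsSymplectic S ∧
        ∀ z : Fin n ⊕ Fin n → ℝ, Real.sqrt (∑ i, z i ^ 2) ≤ R →
          M.mulVec (S.mulVec z) ⬝ᵥ S.mulVec z ≤ 1) ↔ R ^ 2 * lam1 ≤ 1) ∧
    sSup {c : ℝ | ∃ R' : ℝ, 0 < R' ∧ c = Real.pi * R' ^ 2 ∧
        ∃ S : Matrix (Fin n ⊕ Fin n) (Fin n ⊕ Fin n) ℝ, IsSymplectic S ∧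
          ∀ z : Fin n ⊕ Fin n → ℝ, Real.sqrt (∑ i, z i ^ 2) ≤ R' →
            M.mulVec (S.mulVec z) ⬝ᵥ S.mulVec z ≤ 1} = Real.pi / lam1 := by
  refine ⟨exists_isSymplectic_ball_subset_iff hM hlam hspec hlam1 hR, ?_⟩
  have hpos : 0 < lam1 := by
    obtain ⟨j, rfl⟩ := hlam1.1
    exact hlam j
  refine IsGreatest.csSup_eq ⟨⟨Real.sqrt lam1⁻¹, by positivity, ?_, ?_⟩, ?_⟩
  · rw [Real.sq_sqrt (by positivity), div_eq_mul_inv]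
  · rw [exists_isSymplectic_ball_subset_iff hM hlam hspec hlam1 (by positivity),
      Real.sq_sqrt (by positivity), inv_mul_cancel₀ hpos.ne']
  · rintro c ⟨R', hR', rfl, hS⟩
    have h := (exists_isSymplectic_ball_subset_iff hM hlam hspec hlam1 hR').1 hS
    rw [le_div_iff₀ hpos]
    nlinarith [Real.pi_pos]
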